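/- arXiv:2111.13616 — 4 statements merged into one kernel-verified Lean document; each statement's English description precedes it below -/
import Mathlib

section
/- Let Γ be a group acting by homeomorphisms on a compact Hausdorff space X and let U ⊆ X be an open subset whose Γ-translates cover X. If two Γ-invariant regular Borel probability measures on X agree on every Borel subset of U, then they are equal. -/
open Pointwise MeasureTheory

/-!
The action of `g` carries the restriction of an invariant measure to `U` onto its restriction to
`g • U`, so two invariant measures that agree on `U` agree on every translate of `U`. Measures that
agree on each of countably many sets agree on their union, and by the Lindelöf property countably
many translates of `U` already cover the space.
-/

lemma exists_countable_iUnion_smul_eq_univ {Γ X : Type*} [Group Γ] [MulAction Γ X]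
    [TopologicalSpace X] [LindelofSpace X] [ContinuousConstSMul Γ X] {U : Set X} (hU : IsOpen U)
    (hcov : ⋃ g : Γ, g • U = Set.univ) :
    ∃ T : Set Γ, T.Countable ∧ ⋃ g ∈ T, g • U = Set.univ := by
  obtain ⟨T, hT, hTcov⟩ := isLindelof_univ.elim_countable_subcover (fun g : Γ ↦ g • U)
    (fun g ↦ hU.smul g) hcov.ge
  exact ⟨T, hT, Set.univ_subset_iff.mp hTcov⟩

section InvariantMeasures

variable {Γ X : Type*} [Group Γ] [MulAction Γ X] [MeasurableSpace X] {μ ν : Measure X}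

lemma map_smul_restrict [MeasurableConstSMul Γ X] [SMulInvariantMeasure Γ X μ] (g : Γ)
    (s : Set X) : (μ.restrict s).map (g • ·) = μ.restrict (g • s) :=
  ((measurePreserving_smul g μ).restrict_image_emb (measurableEmbedding_const_smul g) s).map_eq

lemma restrict_smul_set_congr [MeasurableConstSMul Γ X] [SMulInvariantMeasure Γ X μ]
    [SMulInvariantMeasure Γ X ν] {s : Set X} (h : μ.restrict s = ν.restrict s) (g : Γ) :
    μ.restrict (g • s) = ν.restrict (g • s) := by
  rw [← map_smul_restrict, ← map_smul_restrict, h]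

theorem invariant_measure_determined_on_cover_general [TopologicalSpace X] [LindelofSpace X]
    [BorelSpace X] [ContinuousConstSMul Γ X] [SMulInvariantMeasure Γ X μ]
    [SMulInvariantMeasure Γ X ν] {U : Set X} (hU : IsOpen U) (hcov : ⋃ g : Γ, g • U = Set.univ)
    (hagree : ∀ A : Set X, MeasurableSet A → A ⊆ U → μ A = ν A) : μ = ν := by
  have hrestrict : μ.restrict U = ν.restrict U :=
    (Measure.restrict_congr_meas hU.measurableSet).mpr fun A hAU hA ↦ hagree A hA hAU
  obtain ⟨T, hT, hTcov⟩ := exists_countable_iUnion_smul_eq_univ hU hcov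
  exact Measure.ext_of_biUnion_eq_univ hT hTcov fun g _ ↦ restrict_smul_set_congr hrestrict g

end InvariantMeasures

/-- If `X` is a compact Hausdorff `Γ`-space and `U ⊆ X` is an open set whose `Γ`-translates
cover `X`, then two `Γ`-invariant regular Borel probability measures on `X` agreeing on
every Borel subset of `U` are equal. -/
theorem invariant_measure_determined_on_cover
    {Γ X : Type*} [Group Γ] [TopologicalSpace X] [CompactSpace X] [T2Space X]
    [MeasurableSpace X] [BorelSpace X] [MulAction Γ X] [ContinuousConstSMul Γ X]
    (U : Set X) (hU : IsOpen U) (hcov : (⋃ g : Γ, g • U) = Set.univ)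
    (ν₁ ν₂ : Measure X)
    (hprob₁ : IsProbabilityMeasure ν₁) (hreg₁ : ν₁.Regular)
    (hinv₁ : ∀ (γ : Γ) (A : Set X), MeasurableSet A → ν₁ (γ • A) = ν₁ A)
    (hprob₂ : IsProbabilityMeasure ν₂) (hreg₂ : ν₂.Regular)
    (hinv₂ : ∀ (γ : Γ) (A : Set X), MeasurableSet A → ν₂ (γ • A) = ν₂ A)
    (hagree : ∀ A : Set X, MeasurableSet A → A ⊆ U → ν₁ A = ν₂ A) :
    ν₁ = ν₂ := by
  have : SMulInvariantMeasure Γ X ν₁ := ((smulInvariantMeasure_tfae Γ ν₁).out 0 2).mpr hinv₁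
  have : SMulInvariantMeasure Γ X ν₂ := ((smulInvariantMeasure_tfae Γ ν₂).out 0 2).mpr hinv₂
  exact invariant_measure_determined_on_cover_general hU hcov hagree
end

section
/- Let Γ be a group acting by homeomorphisms on a compact Hausdorff space X, let U ⊆ X be open, let g_1, …, g_n ∈ Γ satisfy X = g_1U ∪ … ∪ g_nU, and set A_i := U \ ⋃_{j<i} g_i⁻¹g_jU. For every μ ∈ P_Γ(U), the formula ν(A) := Σ_{i=1}^n μ(A_i ∩ g_i⁻¹A), for Borel sets A ⊆ X, defines a Γ-invariant regular Borel measure ν on X whose restriction to Borel subsets of U equals μ; in particular, the normalization ν/ν(X) is a Γ-invariant Borel probability measure on X. -/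
open Pointwise MeasureTheory
open scoped ENNReal

/-- `P_Γ(U)`: the set of regular Borel probability measures concentrated on `U` satisfying
`μ(A ∩ g⁻¹U) = μ(gA ∩ U)` for every `g ∈ Γ` and Borel `A ⊆ U`. -/
def PGamma (Γ : Type*) {X : Type*} [Group Γ] [MulAction Γ X] [TopologicalSpace X]
    [MeasurableSpace X] (U : Set X) : Set (Measure X) :=
  {μ | IsProbabilityMeasure μ ∧ μ.Regular ∧ μ Uᶜ = 0 ∧
    ∀ (g : Γ) (A : Set X), MeasurableSet A → A ⊆ U →
      μ (A ∩ g⁻¹ • U) = μ ((g • A) ∩ U)}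

/-!
The sets `gᵢAᵢ` partition `X`, and `ν` carries `μ` from each `Aᵢ` to `gᵢAᵢ`. Since `μ` does not
change under translations that keep a set inside `U`, a Borel set `S ⊆ hU` has `ν(S) = μ(h⁻¹S)`,
whatever the pieces are: cut `S` along the partition and move every part into `h⁻¹S ⊆ U`. Taking
`h = 1` shows that `ν` extends `μ`. For invariance, `γ` maps the part `S ∩ gᵢAᵢ` of `S` into
`γgᵢU`, so both `ν(S ∩ gᵢAᵢ)` and its translate by `γ` have the value `μ(Aᵢ ∩ gᵢ⁻¹S)`.
-/

section Measurable

variable {Γ X ι : Type*} [Group Γ] [MulAction Γ X] {U : Set X} {g : ι → Γ} {A : ι → Set X}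

/-- The sets `U \ ⋃_{j<i} gᵢ⁻¹gⱼU`, written `Aᵢ` in the theorem: the translate `gᵢAᵢ` consists of
the points `x` for which `i` is the first index with `x ∈ gᵢU`. -/
def firstCoverPiece [LT ι] (U : Set X) (g : ι → Γ) (i : ι) : Set X :=
  U \ ⋃ j : ι, ⋃ _ : j < i, (g i)⁻¹ • (g j • U)

theorem mem_smul_firstCoverPiece [LT ι] {i : ι} {x : X} :
    x ∈ g i • firstCoverPiece U g i ↔ x ∈ g i • U ∧ ∀ j < i, x ∉ g j • U := by
  simp [firstCoverPiece, Set.mem_smul_set_iff_inv_smul_mem]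

variable [MeasurableSpace X] {μ : Measure X}

/-- Measurable pieces `Aᵢ` of `U` whose translates `gᵢAᵢ` partition the whole space. -/
structure IsTranslatePartition (U : Set X) (g : ι → Γ) (A : ι → Set X) : Prop where
  measurableSet (i : ι) : MeasurableSet (A i)
  subset (i : ι) : A i ⊆ U
  pairwise_disjoint : Pairwise fun i j ↦ Disjoint (g i • A i) (g j • A j)
  iUnion_eq_univ : ⋃ i, g i • A i = Set.univ

/-- Invariance of `μ` under the partial action of `Γ` on `U`: translating a measurable subset of
`U` does not change its measure as long as the translate stays inside `U`. -/
def IsInvariantOn (Γ : Type*) [Group Γ] [MulAction Γ X] (μ : Measure X) (U : Set X) : Prop :=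
  ∀ ⦃γ : Γ⦄ ⦃S : Set X⦄, MeasurableSet S → S ⊆ U → γ • S ⊆ U → μ (γ • S) = μ S

/-- The measure `ν` of the theorem: the sum over `i` of `μ` restricted to `Aᵢ` and transported by
`gᵢ`. -/
noncomputable def translateSum (μ : Measure X) (g : ι → Γ) (A : ι → Set X) : Measure X :=
  Measure.sum fun i ↦ (μ.restrict (A i)).map (g i • ·)

instance isFiniteMeasure_translateSum [Finite ι] [IsFiniteMeasure μ] :
    IsFiniteMeasure (translateSum μ g A) := by
  unfold translateSum
  infer_instance

theorem isInvariantOn_of_mem_PGamma [TopologicalSpace X] (hμ : μ ∈ PGamma Γ U) :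
    IsInvariantOn Γ μ U := by
  obtain ⟨-, -, -, hinv⟩ := hμ
  intro γ S hS hSU hγS
  have hSγ : S ⊆ γ⁻¹ • U := Set.smul_set_subset_iff_subset_inv_smul_set.1 hγS
  simpa only [Set.inter_eq_left.2 hSγ, Set.inter_eq_left.2 hγS] using (hinv γ S hS hSU).symm

variable [MeasurableConstSMul Γ X]

theorem measurableSet_firstCoverPiece [LT ι] [Countable ι] (hU : MeasurableSet U) (i : ι) :
    MeasurableSet (firstCoverPiece U g i) :=
  hU.diff <| .iUnion fun j ↦ .iUnion fun _ ↦ (hU.const_smul (g j)).const_smul (g i)⁻¹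

theorem isTranslatePartition_firstCoverPiece [LinearOrder ι] [WellFoundedLT ι] [Countable ι]
    (hU : MeasurableSet U) (hcov : ⋃ i, g i • U = Set.univ) :
    IsTranslatePartition U g (firstCoverPiece U g) where
  measurableSet := measurableSet_firstCoverPiece hU
  subset _ := Set.sdiff_subset
  pairwise_disjoint i j hij := by
    refine Set.disjoint_left.2 fun x hxi hxj ↦ ?_
    rw [mem_smul_firstCoverPiece] at hxi hxj
    rcases lt_or_gt_of_ne hij with hlt | hgt
    · exact hxj.2 i hlt hxi.1
    · exact hxi.2 j hgt hxj.1
  iUnion_eq_univ := by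
    refine Set.eq_univ_of_forall fun x ↦ ?_
    have hx : {i | x ∈ g i • U}.Nonempty := Set.mem_iUnion.1 (hcov ▸ Set.mem_univ x)
    obtain ⟨i, hi, hmin⟩ := wellFounded_lt.has_min _ hx
    exact Set.mem_iUnion.2 ⟨i, mem_smul_firstCoverPiece.2 ⟨hi, fun j hj hxj ↦ hmin j hxj hj⟩⟩

theorem translateSum_apply (μ : Measure X) (g : ι → Γ) (A : ι → Set X) {S : Set X}
    (hS : MeasurableSet S) : translateSum μ g A S = ∑' i, μ (A i ∩ (g i)⁻¹ • S) := by
  rw [translateSum, Measure.sum_apply _ hS]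
  refine tsum_congr fun i ↦ ?_
  have hmeas : Measurable (g i • · : X → X) := measurable_const_smul (g i)
  rw [Measure.map_apply hmeas hS, Measure.restrict_apply (hmeas hS), Set.preimage_smul,
    Set.inter_comm]

namespace IsTranslatePartition

variable [Countable ι]

theorem measure_smul_eq_tsum (hA : IsTranslatePartition U g A) (ν : Measure X) (γ : Γ) {S : Set X}
    (hS : MeasurableSet S) : ν (γ • S) = ∑' i, ν (γ • (S ∩ g i • A i)) := by
  rw [← measure_iUnion]
  · rw [← Set.smul_set_iUnion, ← Set.inter_iUnion, hA.iUnion_eq_univ, Set.inter_univ]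
  · exact fun i j hij ↦ Set.disjoint_smul_set.2 <|
      (hA.pairwise_disjoint hij).mono Set.inter_subset_right Set.inter_subset_right
  · exact fun i ↦ (hS.inter ((hA.measurableSet i).const_smul (g i))).const_smul γ

theorem translateSum_apply_of_subset_smul (hA : IsTranslatePartition U g A)
    (hμ : IsInvariantOn Γ μ U) {h : Γ} {S : Set X} (hS : MeasurableSet S) (hSU : S ⊆ h • U) :
    translateSum μ g A S = μ (h⁻¹ • S) := by
  rw [translateSum_apply μ g A hS, hA.measure_smul_eq_tsum μ h⁻¹ hS]
  refine tsum_congr fun i ↦ ?_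
  have htranslate : h⁻¹ • (S ∩ g i • A i) = (h⁻¹ * g i) • (A i ∩ (g i)⁻¹ • S) := by
    rw [mul_smul, Set.smul_set_inter (a := g i), smul_inv_smul, Set.inter_comm]
  have hsubset : h⁻¹ • (S ∩ g i • A i) ⊆ U :=
    Set.subset_smul_set_iff.1 (Set.inter_subset_left.trans hSU)
  rw [htranslate] at hsubset ⊢
  exact (hμ ((hA.measurableSet i).inter (hS.const_smul _))
    (Set.inter_subset_left.trans (hA.subset i)) hsubset).symm

theorem translateSum_restrict (hA : IsTranslatePartition U g A) (hμ : IsInvariantOn Γ μ U)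
    (hU : MeasurableSet U) : (translateSum μ g A).restrict U = μ.restrict U := by
  ext S hS
  have hSU : S ∩ U ⊆ (1 : Γ) • U := by simp
  rw [Measure.restrict_apply hS, Measure.restrict_apply hS,
    hA.translateSum_apply_of_subset_smul hμ (hS.inter hU) hSU, inv_one, one_smul]

theorem translateSum_smul_inter (hA : IsTranslatePartition U g A) (hμ : IsInvariantOn Γ μ U)
    (γ : Γ) {S : Set X} (hS : MeasurableSet S) (i : ι) :
    translateSum μ g A (γ • (S ∩ g i • A i)) = μ (A i ∩ (g i)⁻¹ • S) := by
  have hsubset : γ • (S ∩ g i • A i) ⊆ (γ * g i) • U := by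
    rw [mul_smul]
    exact Set.smul_set_mono (Set.inter_subset_right.trans (Set.smul_set_mono (hA.subset i)))
  have hmeas := (hS.inter ((hA.measurableSet i).const_smul (g i))).const_smul γ
  rw [hA.translateSum_apply_of_subset_smul hμ hmeas hsubset, mul_inv_rev, mul_smul, inv_smul_smul,
    Set.smul_set_inter, inv_smul_smul, Set.inter_comm]

theorem smulInvariantMeasure_translateSum (hA : IsTranslatePartition U g A)
    (hμ : IsInvariantOn Γ μ U) : SMulInvariantMeasure Γ X (translateSum μ g A) where
  measure_preimage_smul γ S hS := by
    rw [Set.preimage_smul, hA.measure_smul_eq_tsum _ γ⁻¹ hS, translateSum_apply μ g A hS]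
    exact tsum_congr (hA.translateSum_smul_inter hμ γ⁻¹ hS)

end IsTranslatePartition

end Measurable

theorem innerRegular_translateSum {Γ X ι : Type*} [Group Γ] [TopologicalSpace X]
    [MeasurableSpace X] [BorelSpace X] [MulAction Γ X] [ContinuousConstSMul Γ X] (μ : Measure X)
    [IsFiniteMeasure μ] [μ.InnerRegularCompactLTTop] (g : ι → Γ) (A : ι → Set X) :
    (translateSum μ g A).InnerRegular := by
  have (i : ι) : ((μ.restrict (A i)).map (g i • ·)).InnerRegularCompactLTTop :=
    .map_of_continuous (continuous_const_smul (g i))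
  unfold translateSum
  infer_instance

theorem extension_of_invariant_measure_general
    {Γ X ι : Type*} [Group Γ] [TopologicalSpace X] [R1Space X]
    [MeasurableSpace X] [BorelSpace X] [MulAction Γ X] [ContinuousConstSMul Γ X]
    [Fintype ι] [LinearOrder ι] (U : Set X) (hU : MeasurableSet U) (g : ι → Γ)
    (hcov : (⋃ i, g i • U) = Set.univ)
    (A : ι → Set X)
    (hA : ∀ i, A i = U \ ⋃ j : ι, ⋃ _ : j < i, (g i)⁻¹ • (g j • U))
    (μ : Measure X) (hμ : μ ∈ PGamma Γ U) :
    ∃ ν : Measure X,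
      (∀ S : Set X, MeasurableSet S → ν S = ∑ i, μ (A i ∩ (g i)⁻¹ • S)) ∧
      ν.Regular ∧
      (∀ (γ : Γ) (S : Set X), MeasurableSet S → ν (γ • S) = ν S) ∧
      ν.restrict U = μ ∧
      IsProbabilityMeasure ((ν Set.univ)⁻¹ • ν) ∧
      (∀ (γ : Γ) (S : Set X), MeasurableSet S →
        ((ν Set.univ)⁻¹ • ν) (γ • S) = ((ν Set.univ)⁻¹ • ν) S) := by
  obtain rfl : A = firstCoverPiece U g := funext hA
  have hpart := isTranslatePartition_firstCoverPiece hU hcov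
  have hinv := isInvariantOn_of_mem_PGamma hμ
  obtain ⟨hprob, hreg, hUc, -⟩ := hμ
  set ν := translateSum μ g (firstCoverPiece U g)
  have hνU : ν.restrict U = μ := by
    rw [hpart.translateSum_restrict hinv hU, Measure.restrict_eq_self_of_ae_mem hUc]
  have hνreg : ν.InnerRegular := innerRegular_translateSum μ g _
  have hνinv : SMulInvariantMeasure Γ X ν := hpart.smulInvariantMeasure_translateSum hinv
  have hνne : NeZero ν := ⟨fun hν ↦ IsProbabilityMeasure.ne_zero μ (by simp [← hνU, hν])⟩
  refine ⟨ν, fun S hS ↦ ?_, inferInstance, fun γ S _ ↦ measure_smul ν γ S, hνU, inferInstance,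
    fun γ S _ ↦ measure_smul _ γ S⟩
  rw [translateSum_apply μ g _ hS, tsum_fintype]

/-- Given a finite cover `X = g₁U ∪ … ∪ gₙU`, the sets `Aᵢ := U \ ⋃_{j<i} gᵢ⁻¹gⱼU`, and
`μ ∈ P_Γ(U)`, the formula `ν(A) := Σᵢ μ(Aᵢ ∩ gᵢ⁻¹A)` defines a `Γ`-invariant regular Borel
measure on `X` restricting to `μ` on Borel subsets of `U`; its normalization `ν/ν(X)` is a
`Γ`-invariant Borel probability measure on `X`. -/
theorem extension_of_invariant_measure
    {Γ X : Type*} [Group Γ] [TopologicalSpace X] [CompactSpace X] [T2Space X]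
    [MeasurableSpace X] [BorelSpace X] [MulAction Γ X] [ContinuousConstSMul Γ X]
    (U : Set X) (hU : IsOpen U) (n : ℕ) (g : Fin n → Γ)
    (hcov : (⋃ i, g i • U) = Set.univ)
    (A : Fin n → Set X)
    (hA : ∀ i, A i = U \ ⋃ j : Fin n, ⋃ _ : j < i, (g i)⁻¹ • (g j • U))
    (μ : Measure X) (hμ : μ ∈ PGamma Γ U) :
    ∃ ν : Measure X,
      (∀ S : Set X, MeasurableSet S → ν S = ∑ i, μ (A i ∩ (g i)⁻¹ • S)) ∧
      ν.Regular ∧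
      (∀ (γ : Γ) (S : Set X), MeasurableSet S → ν (γ • S) = ν S) ∧
      ν.restrict U = μ ∧
      IsProbabilityMeasure ((ν Set.univ)⁻¹ • ν) ∧
      (∀ (γ : Γ) (S : Set X), MeasurableSet S →
        ((ν Set.univ)⁻¹ • ν) (γ • S) = ((ν Set.univ)⁻¹ • ν) S) :=
  extension_of_invariant_measure_general U hU.measurableSet g hcov A hA μ hμ
end

section
/- Let G be a group of homeomorphisms of a compact metrizable space X and let Λ ≤ G be a subgroup such that for every g ∈ G and every x ∈ X there exist a neighborhood U of x and h ∈ Λ with h|_U = g|_U. Then every Λ-invariant regular Borel probability measure on X is G-invariant; consequently the set of G-invariant regular Borel probability measures on X coincides with the set of Λ-invariant ones. -/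
open Pointwise MeasureTheory Filter Topology

/-- The group of self-homeomorphisms of `X`, with `(f * g) x = f (g x)`. -/
instance homeoGroup {X : Type*} [TopologicalSpace X] : Group (X ≃ₜ X) where
  mul f g := g.trans f
  one := Homeomorph.refl X
  inv := Homeomorph.symm
  mul_assoc _ _ _ := Homeomorph.ext fun _ => rfl
  one_mul _ := Homeomorph.ext fun _ => rfl
  mul_one _ := Homeomorph.ext fun _ => rfl
  inv_mul_cancel f := Homeomorph.ext fun x => f.symm_apply_apply x

/- Transport `ν` along each `g ∈ G`: on a neighborhood where `g` agrees with some `h ∈ Λ`, the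
measures `ν.comap g` and `ν.comap h = ν` agree. So `ν.comap g` and `ν` agree locally, hence on
countably many sets covering `X`, hence everywhere. -/

theorem measure_eq_of_locally_restrict_eq {X : Type*} [TopologicalSpace X] [LindelofSpace X]
    [MeasurableSpace X] {μ ν : Measure X}
    (h : ∀ x, ∃ U ∈ 𝓝 x, μ.restrict U = ν.restrict U) : μ = ν := by
  choose U hU hμν using h
  obtain ⟨t, ht, hcover⟩ := countable_cover_nhds hU
  exact Measure.ext_of_biUnion_eq_univ ht hcover fun x _ => hμν x

section Comap

variable {X Y : Type*} [MeasurableSpace X] [MeasurableSpace Y] {f g : X → Y}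

theorem comap_eq_iff_forall_measure_image_eq (hf : MeasurableEmbedding f)
    {μ : Measure X} {ν : Measure Y} :
    ν.comap f = μ ↔ ∀ A, MeasurableSet A → ν (f '' A) = μ A := by
  simp only [Measure.ext_iff, hf.comap_apply]

theorem restrict_comap_congr (hf : MeasurableEmbedding f) (hg : MeasurableEmbedding g)
    {U : Set X} (hfg : Set.EqOn f g U) (ν : Measure Y) :
    (ν.comap f).restrict U = (ν.comap g).restrict U := by
  ext A hA
  rw [Measure.restrict_apply hA, Measure.restrict_apply hA, hf.comap_apply, hg.comap_apply,
    (hfg.mono Set.inter_subset_right).image_eq]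

theorem comap_eq_of_locally_eqOn [TopologicalSpace X] [LindelofSpace X]
    {μ : Measure X} {ν : Measure Y} (hf : MeasurableEmbedding f)
    (hloc : ∀ x, ∃ U ∈ 𝓝 x, ∃ h : X → Y,
      MeasurableEmbedding h ∧ ν.comap h = μ ∧ Set.EqOn h f U) :
    ν.comap f = μ := by
  refine measure_eq_of_locally_restrict_eq fun x => ?_
  obtain ⟨U, hU, h, hh, rfl, hhf⟩ := hloc x
  exact ⟨U, hU, restrict_comap_congr hf hh hhf.symm ν⟩

end Comap

theorem covering_subgroup_invariant_measures_general
    {X : Type*} [TopologicalSpace X] [LindelofSpace X] [MeasurableSpace X] [BorelSpace X]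
    {G Λ : Set (X ≃ₜ X)} (hle : Λ ⊆ G)
    (hcov : ∀ g ∈ G, ∀ x : X, ∃ U ∈ 𝓝 x, ∃ h ∈ Λ, ∀ y ∈ U, h y = g y) (ν : Measure X) :
    (∀ h ∈ Λ, ∀ A : Set X, MeasurableSet A → ν (⇑h '' A) = ν A) ↔
      ∀ g ∈ G, ∀ A : Set X, MeasurableSet A → ν (⇑g '' A) = ν A := by
  simp only [← comap_eq_iff_forall_measure_image_eq (Homeomorph.measurableEmbedding _)]
  refine ⟨fun hΛ g hg => ?_, fun hG h hh => hG h (hle hh)⟩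
  refine comap_eq_of_locally_eqOn g.measurableEmbedding fun x => ?_
  obtain ⟨U, hU, h, hh, hhg⟩ := hcov g hg x
  exact ⟨U, hU, h, h.measurableEmbedding, hΛ h hh, hhg⟩

/-- If `G` is a group of homeomorphisms of a compact metrizable space `X` and `Λ ≤ G` is
such that every element of `G` locally coincides with an element of `Λ`, then every
`Λ`-invariant regular Borel probability measure is `G`-invariant; consequently the sets of
invariant measures coincide. -/
theorem covering_subgroup_invariant_measures
    {X : Type*} [TopologicalSpace X] [CompactSpace X] [TopologicalSpace.MetrizableSpace X]
    [MeasurableSpace X] [BorelSpace X]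
    (G Λ : Subgroup (X ≃ₜ X)) (hle : Λ ≤ G)
    (hcov : ∀ g ∈ G, ∀ x : X, ∃ U ∈ nhds x, ∃ h ∈ Λ, ∀ y ∈ U, h y = g y) :
    (∀ ν : Measure X, IsProbabilityMeasure ν → ν.Regular →
      (∀ h ∈ Λ, ∀ A : Set X, MeasurableSet A → ν (⇑h '' A) = ν A) →
      (∀ g ∈ G, ∀ A : Set X, MeasurableSet A → ν (⇑g '' A) = ν A)) ∧
    {ν : Measure X | IsProbabilityMeasure ν ∧ ν.Regular ∧
        ∀ h ∈ Λ, ∀ A : Set X, MeasurableSet A → ν (⇑h '' A) = ν A} =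
      {ν : Measure X | IsProbabilityMeasure ν ∧ ν.Regular ∧
        ∀ g ∈ G, ∀ A : Set X, MeasurableSet A → ν (⇑g '' A) = ν A} := by
  have invariant_iff := covering_subgroup_invariant_measures_general hle hcov
  exact ⟨fun ν _ _ => (invariant_iff ν).mp,
    Set.ext fun ν => and_congr_right' (and_congr_right' (invariant_iff ν))⟩
end

section
/- Let Γ be a countable group acting by homeomorphisms on a compact metrizable space X. Then the map Stab⁰ : X → Sub(Γ), sending x to the subgroup Γ_x^0 of elements of Γ that fix pointwise some neighborhood of x, is Borel measurable and Γ-equivariant (where Γ acts on Sub(Γ) by conjugation). Moreover, if ν is a Γ-invariant Borel probability measure on X with full support, then the pushforward measure ρ := (Stab⁰)_*ν is a conjugation-invariant Borel probability measure on Sub(Γ), and for every non-identity g ∈ Γ that fixes pointwise some nonempty open subset of X one has ρ({K ∈ Sub(Γ) : g ∈ K}) > 0; in particular, if such a g exists then ρ ≠ δ_{{e}}. -/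
open Pointwise MeasureTheory Filter Topology

/-- The subgroup `Γₓ⁰` of elements of `Γ` fixing pointwise some neighborhood of `x`. -/
def germStabilizer (Γ : Type*) {X : Type*} [Group Γ] [TopologicalSpace X] [MulAction Γ X]
    (x : X) : Subgroup Γ where
  carrier := {g | ∀ᶠ y in nhds x, g • y = y}
  one_mem' := Eventually.of_forall fun y => one_smul Γ y
  mul_mem' := by
    intro a b ha hb
    filter_upwards [ha, hb] with y h1 h2
    rw [mul_smul, h2, h1]
  inv_mem' := by
    intro a ha
    filter_upwards [ha] with y hy
    exact inv_smul_eq_iff.mpr hy.symm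

/-- The Chabauty topology on the space of subgroups of `G`, induced from the product
topology on `{0,1}^G` (each factor discrete) via characteristic functions. -/
instance chabautyTopology (G : Type*) [Group G] : TopologicalSpace (Subgroup G) :=
  TopologicalSpace.induced (fun K => (fun g => g ∈ K : G → Prop))
    (@Pi.topologicalSpace G (fun _ => Prop) (fun _ => ⊥))

/-- The Borel σ-algebra of the Chabauty topology. -/
instance chabautyMeasurableSpace (G : Type*) [Group G] : MeasurableSpace (Subgroup G) :=
  borel (Subgroup G)

instance chabautyBorelSpace (G : Type*) [Group G] : BorelSpace (Subgroup G) := ⟨rfl⟩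

/-- The conjugate subgroup `g Λ g⁻¹`. -/
def conjSubgroup {G : Type*} [Group G] (g : G) (Λ : Subgroup G) : Subgroup G :=
  Λ.map (MulAut.conj g).toMonoidHom

/-!
The set of points `x` with `g ∈ Γₓ⁰` is the interior of the fixed-point set of `g`. It is open,
which gives measurability because `Γ` is countable; it is carried to the corresponding set of
`hgh⁻¹` by `h`, which gives equivariance; and its `ν`-measure is `ρ {K | g ∈ K}`, which is positive
as soon as `g` fixes a nonempty open set pointwise.
-/

open MulAction

section

variable {G X Y : Type*} [Group G]

theorem continuous_subgroup_iff [TopologicalSpace Y] {f : Y → Subgroup G} :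
    Continuous f ↔ ∀ g, IsClopen {y | g ∈ f y} := by
  -- Mathlib's instance on `Prop` is the Sierpiński topology, so the discrete one is made local.
  let _ : TopologicalSpace Prop := ⊥
  have : DiscreteTopology Prop := ⟨rfl⟩
  rw [continuous_induced_rng, continuous_pi_iff]
  refine forall_congr' fun g => ⟨fun hg => (isClopen_discrete {p : Prop | p}).preimage hg,
    fun hg => ?_⟩
  refine continuous_discrete_rng.2 fun p => ?_
  change IsOpen {y | (g ∈ f y) = p}
  by_cases hp : p
  · simpa only [hp, eq_iff_iff, iff_true] using hg.isOpen
  · simpa only [hp, eq_iff_iff, iff_false, Set.compl_ofPred] using hg.compl.isOpen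

theorem isClopen_setOfPred_mem_subgroup (g : G) : IsClopen {K : Subgroup G | g ∈ K} :=
  continuous_subgroup_iff.1 continuous_id g

theorem measurable_subgroup_iff [Countable G] [MeasurableSpace Y] {f : Y → Subgroup G} :
    Measurable f ↔ ∀ g, MeasurableSet {y | g ∈ f y} := by
  let _ : TopologicalSpace Prop := ⊥
  have : DiscreteTopology Prop := ⟨rfl⟩
  have : BorelSpace Prop := ⟨borel_eq_top_of_discrete.symm⟩
  have borel_eq_comap : chabautyMeasurableSpace G =
      MeasurableSpace.comap (fun K g => g ∈ K : Subgroup G → G → Prop) MeasurableSpace.pi := by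
    rw [BorelSpace.measurable_eq (α := G → Prop)]
    exact borel_comap
  rw [borel_eq_comap, measurable_comap_iff, measurable_pi_iff]
  exact forall_congr' fun g => measurableSet_setOfPred.symm

theorem mem_conjSubgroup {g h : G} {K : Subgroup G} :
    h ∈ conjSubgroup g K ↔ g⁻¹ * h * g ∈ K :=
  Subgroup.mem_map_equiv

theorem continuous_conjSubgroup (g : G) : Continuous (conjSubgroup g) := by
  simp only [continuous_subgroup_iff, mem_conjSubgroup]
  exact fun h => isClopen_setOfPred_mem_subgroup (g⁻¹ * h * g)

section germStabilizer

variable [TopologicalSpace X] [MulAction G X]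

theorem mem_germStabilizer_iff_mem_interior_fixedBy {g : G} {x : X} :
    g ∈ germStabilizer G x ↔ x ∈ interior (fixedBy X g) :=
  mem_interior_iff_mem_nhds.symm

theorem germStabilizer_smul [ContinuousConstSMul G X] (g : G) (x : X) :
    germStabilizer G (g • x) = conjSubgroup g (germStabilizer G x) := by
  ext h
  calc h ∈ germStabilizer G (g • x)
      ↔ x ∈ g⁻¹ • interior (fixedBy X h) := by
        rw [mem_germStabilizer_iff_mem_interior_fixedBy, Set.mem_inv_smul_set_iff]
    _ ↔ x ∈ interior (fixedBy X (g⁻¹ * h * g)) := by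
        rw [← interior_smul, smul_fixedBy, inv_inv]
    _ ↔ h ∈ conjSubgroup g (germStabilizer G x) := by
        rw [mem_conjSubgroup, mem_germStabilizer_iff_mem_interior_fixedBy]

variable [MeasurableSpace X] [OpensMeasurableSpace X] [Countable G]

theorem measurable_germStabilizer : Measurable (germStabilizer G : X → Subgroup G) := by
  simp only [measurable_subgroup_iff, mem_germStabilizer_iff_mem_interior_fixedBy]
  exact fun g => isOpen_interior.measurableSet

theorem map_germStabilizer_setOfPred_mem (ν : Measure X) (g : G) :
    ν.map (germStabilizer G) {K | g ∈ K} = ν (interior (fixedBy X g)) := by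
  rw [Measure.map_apply measurable_germStabilizer
    (isClopen_setOfPred_mem_subgroup g).isOpen.measurableSet]
  simp only [Set.preimage_ofPred_eq, mem_germStabilizer_iff_mem_interior_fixedBy, Set.ofPred_mem_eq]

theorem map_conjSubgroup_map_germStabilizer [ContinuousConstSMul G X] [MeasurableConstSMul G X]
    (ν : Measure X) [SMulInvariantMeasure G X ν] (g : G) :
    (ν.map (germStabilizer G)).map (conjSubgroup g) = ν.map (germStabilizer G) := by
  have equivariant : conjSubgroup g ∘ germStabilizer G = germStabilizer G ∘ (g • · : X → X) :=
    funext fun x => (germStabilizer_smul g x).symm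
  rw [Measure.map_map (continuous_conjSubgroup g).measurable measurable_germStabilizer,
    equivariant, ← Measure.map_map measurable_germStabilizer (measurable_const_smul g),
    MeasureTheory.map_smul]

theorem map_germStabilizer_setOfPred_mem_pos (ν : Measure X) [ν.IsOpenPosMeasure] {g : G}
    (hg : (interior (fixedBy X g)).Nonempty) :
    0 < ν.map (germStabilizer G) {K | g ∈ K} := by
  rw [map_germStabilizer_setOfPred_mem]
  exact isOpen_interior.measure_pos ν hg

theorem map_germStabilizer_ne_dirac_bot (ν : Measure X) [ν.IsOpenPosMeasure] {g : G}
    (hg_ne : g ≠ 1) (hg : (interior (fixedBy X g)).Nonempty) :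
    ν.map (germStabilizer G) ≠ Measure.dirac ⊥ := by
  intro map_eq
  have dirac_pos := map_germStabilizer_setOfPred_mem_pos ν hg
  rw [map_eq, Measure.dirac_apply' _ (isClopen_setOfPred_mem_subgroup g).isOpen.measurableSet]
    at dirac_pos
  simp [hg_ne] at dirac_pos

end germStabilizer

theorem interior_fixedBy_nonempty_iff [TopologicalSpace X] [MulAction G X] {g : G} :
    (interior (fixedBy X g)).Nonempty ↔
      ∃ V : Set X, IsOpen V ∧ V.Nonempty ∧ ∀ y ∈ V, g • y = y := by
  constructor
  · exact fun hg => ⟨_, isOpen_interior, hg, fun _ hy => mem_fixedBy.1 (interior_subset hy)⟩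
  · rintro ⟨V, hV, hV_nonempty, hV_fixed⟩
    exact hV_nonempty.mono (interior_maximal hV_fixed hV)

theorem germStabilizer_pushforward_general [Countable G] [TopologicalSpace X]
    [MeasurableSpace X] [OpensMeasurableSpace X] [MulAction G X] [ContinuousConstSMul G X]
    [MeasurableConstSMul G X] :
    Measurable (germStabilizer G : X → Subgroup G) ∧
    (∀ (g : G) (x : X), germStabilizer G (g • x) = conjSubgroup g (germStabilizer G x)) ∧
    (∀ g : G, Measurable (conjSubgroup g)) ∧
    ∀ ν : Measure X, IsProbabilityMeasure ν →
      (∀ (g : G) (A : Set X), MeasurableSet A → ν (g • A) = ν A) →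
      (∀ V : Set X, IsOpen V → V.Nonempty → 0 < ν V) →
      IsProbabilityMeasure (ν.map (germStabilizer G)) ∧
      (∀ g : G, (ν.map (germStabilizer G)).map (conjSubgroup g) = ν.map (germStabilizer G)) ∧
      (∀ g : G, (∃ V : Set X, IsOpen V ∧ V.Nonempty ∧ ∀ y ∈ V, g • y = y) →
        0 < ν.map (germStabilizer G) {K | g ∈ K}) ∧
      ((∃ g : G, g ≠ 1 ∧ ∃ V : Set X, IsOpen V ∧ V.Nonempty ∧ ∀ y ∈ V, g • y = y) →
        ν.map (germStabilizer G) ≠ Measure.dirac ⊥) := by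
  refine ⟨measurable_germStabilizer, germStabilizer_smul,
    fun g => (continuous_conjSubgroup g).measurable, fun ν _ ν_inv ν_pos => ?_⟩
  have : SMulInvariantMeasure G X ν :=
    ⟨fun g A hA => by rw [Set.preimage_smul, ν_inv _ _ hA]⟩
  have : ν.IsOpenPosMeasure := ⟨fun V hV hV_nonempty => (ν_pos V hV hV_nonempty).ne'⟩
  simp only [← interior_fixedBy_nonempty_iff]
  refine ⟨?_, ?_, ?_, ?_⟩
  · exact Measure.isProbabilityMeasure_map measurable_germStabilizer.aemeasurable
  · exact map_conjSubgroup_map_germStabilizer ν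
  · exact fun g => map_germStabilizer_setOfPred_mem_pos ν
  · exact fun ⟨g, hg_ne, hg⟩ => map_germStabilizer_ne_dirac_bot ν hg_ne hg

end

/-- The map `Stab⁰ : x ↦ Γₓ⁰` is Borel measurable and `Γ`-equivariant (for the conjugation
action on subgroups); for a fully supported invariant Borel probability measure `ν`, the
pushforward `ρ = (Stab⁰)_* ν` is a conjugation-invariant Borel probability measure on
`Sub(Γ)`, which gives positive mass to `{K : g ∈ K}` whenever `g ≠ 1` fixes a nonempty
open set pointwise; in particular `ρ ≠ δ_⊥` if such a `g` exists. -/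
theorem germStabilizer_pushforward
    {Γ X : Type*} [Group Γ] [Countable Γ]
    [TopologicalSpace X] [CompactSpace X] [TopologicalSpace.MetrizableSpace X]
    [MeasurableSpace X] [BorelSpace X]
    [MulAction Γ X] [ContinuousConstSMul Γ X] :
    Measurable (fun x : X => germStabilizer Γ x) ∧
    (∀ (g : Γ) (x : X), germStabilizer Γ (g • x) = conjSubgroup g (germStabilizer Γ x)) ∧
    (∀ g : Γ, Measurable (fun K : Subgroup Γ => conjSubgroup g K)) ∧
    (∀ ν : Measure X, IsProbabilityMeasure ν →
      (∀ (g : Γ) (A : Set X), MeasurableSet A → ν (g • A) = ν A) →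
      (∀ V : Set X, IsOpen V → V.Nonempty → 0 < ν V) →
      IsProbabilityMeasure (ν.map (fun x => germStabilizer Γ x)) ∧
      (∀ g : Γ, (ν.map (fun x => germStabilizer Γ x)).map (fun K => conjSubgroup g K) =
        ν.map (fun x => germStabilizer Γ x)) ∧
      (∀ g : Γ, g ≠ 1 → (∃ V : Set X, IsOpen V ∧ V.Nonempty ∧ ∀ y ∈ V, g • y = y) →
        0 < (ν.map (fun x => germStabilizer Γ x)) {K : Subgroup Γ | g ∈ K}) ∧
      ((∃ g : Γ, g ≠ 1 ∧ ∃ V : Set X, IsOpen V ∧ V.Nonempty ∧ ∀ y ∈ V, g • y = y) →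
        ν.map (fun x => germStabilizer Γ x) ≠ Measure.dirac (⊥ : Subgroup Γ))) := by
  obtain ⟨meas, equivariant, meas_conj, push⟩ :=
    germStabilizer_pushforward_general (G := Γ) (X := X)
  exact ⟨meas, equivariant, meas_conj, fun ν ν_prob ν_inv ν_pos =>
    (push ν ν_prob ν_inv ν_pos).imp_right (.imp_right (.imp_left fun pos g _ => pos g))⟩
end
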